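/- Let z* ∈ X and assume z − z* ∈ T₀(z*) for every z ∈ X. Suppose there exists d* ∈ E minimizing d ↦ ∇g(z*)·d over T₀(z*) with ∇g(z*)·d* ≥ 0. Then (a) g(z*) ≤ g(z) for every z ∈ X, and (b) there exist u* ∈ ℝ^s with u* ≥ 0 and v* ∈ ℝ^r (not necessarily nonnegative) such that ∇g(z*) + Σᵢ uᵢ* ∇gᵢ(z*) + Σⱼ vⱼ* ∇hⱼ(z*) = 0 and uᵢ* gᵢ(z*) = 0 for every i = 1,…,s. -/

import Mathlib

section Farkas

variable {𝕜 E ι κ : Type*} [Field 𝕜] [LinearOrder 𝕜] [IsStrictOrderedRing 𝕜]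
  [AddCommGroup E] [Module 𝕜 E]

/-- **Farkas' lemma** for finitely many linear functionals, with no topology on `E`. -/
theorem exists_nonneg_sum_smul_eq_of_forall_nonpos (S : Finset ι)
    (a : ι → Module.Dual 𝕜 E) (b : Module.Dual 𝕜 E)
    (hab : ∀ x, (∀ i ∈ S, a i x ≤ 0) → b x ≤ 0) :
    ∃ u : ι → 𝕜, (∀ i ∈ S, 0 ≤ u i) ∧ ∑ i ∈ S, u i • a i = b := by
  classical
  induction S using Finset.induction_on generalizing a b with
  | empty =>
    refine ⟨0, by simp, ?_⟩
    ext x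
    have hx := hab x (by simp)
    have hx' := hab (-x) (by simp)
    rw [map_neg] at hx'
    simpa using (le_antisymm hx (by linarith)).symm
  | insert k S hk ih =>
    have sum_update (u : ι → 𝕜) (c : 𝕜) :
        ∑ i ∈ S, Function.update u k c i • a i = ∑ i ∈ S, u i • a i :=
      Finset.sum_congr rfl fun i hi => by
        rw [Function.update_of_ne (ne_of_mem_of_not_mem hi hk)]
    have update_nonneg {u : ι → 𝕜} {c : 𝕜} (hu : ∀ i ∈ S, 0 ≤ u i) (hc : 0 ≤ c) :
        ∀ i ∈ insert k S, 0 ≤ Function.update u k c i := fun i hi => by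
      rcases eq_or_ne i k with rfl | hne
      · simpa using hc
      · simpa [hne] using hu i (Finset.mem_of_mem_insert_of_ne hi hne)
    by_cases hS : ∀ x, (∀ i ∈ S, a i x ≤ 0) → b x ≤ 0
    · obtain ⟨u, hu, hsum⟩ := ih a b hS
      refine ⟨Function.update u k 0, update_nonneg hu le_rfl, ?_⟩
      rw [Finset.sum_insert hk, sum_update, hsum]
      simp
    · push Not at hS
      obtain ⟨y, hy, hby⟩ := hS
      have hky : 0 < a k y := by
        by_contra! hle
        exact hby.not_ge (hab y (Finset.forall_mem_insert _ _ _ |>.2 ⟨hle, hy⟩))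
      obtain ⟨u, hu, hsum⟩ := ih (fun i => a i - (a i y / a k y) • a k)
          (b - (b y / a k y) • a k) fun x hx => by
        have h := hab (x - (a k x / a k y) • y) (Finset.forall_mem_insert _ _ _ |>.2
          ⟨by simp [hky.ne'], fun i hi => by
            have := hx i hi
            simp only [LinearMap.sub_apply, LinearMap.smul_apply, smul_eq_mul, map_sub,
              map_smul] at this ⊢
            convert this using 2
            ring⟩)
        simp only [LinearMap.sub_apply, LinearMap.smul_apply, smul_eq_mul, map_sub,
          map_smul] at h ⊢
        convert h using 2
        ring
      refine ⟨Function.update u k (b y / a k y - ∑ i ∈ S, u i * (a i y / a k y)),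
        update_nonneg hu ?_, ?_⟩
      · have : ∑ i ∈ S, u i * (a i y / a k y) ≤ 0 := Finset.sum_nonpos fun i hi =>
          mul_nonpos_of_nonneg_of_nonpos (hu i hi) (div_nonpos_of_nonpos_of_nonneg (hy i hi) hky.le)
        have := div_pos hby hky
        linarith
      · rw [Finset.sum_insert hk, sum_update, Function.update_self]
        ext x
        have hx := LinearMap.congr_fun hsum x
        simp only [LinearMap.sum_apply, LinearMap.add_apply, LinearMap.sub_apply,
          LinearMap.smul_apply, smul_eq_mul, mul_sub, Finset.sum_sub_distrib, sub_mul,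
          Finset.sum_mul, mul_assoc] at hx ⊢
        linear_combination hx

/-- Farkas' lemma with finitely many inequality and equality constraints. -/
theorem exists_nonneg_sum_smul_add_sum_smul_eq [Fintype κ] (S : Finset ι)
    (a : ι → Module.Dual 𝕜 E) (c : κ → Module.Dual 𝕜 E) (b : Module.Dual 𝕜 E)
    (hab : ∀ x, (∀ i ∈ S, a i x ≤ 0) → (∀ j, c j x = 0) → b x ≤ 0) :
    ∃ (u : ι → 𝕜) (v : κ → 𝕜), (∀ i ∈ S, 0 ≤ u i) ∧
      ∑ i ∈ S, u i • a i + ∑ j, v j • c j = b := by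
  obtain ⟨w, hw, hsum⟩ := exists_nonneg_sum_smul_eq_of_forall_nonpos
    (S.disjSum (Finset.univ : Finset (κ ⊕ κ))) (Sum.elim a (Sum.elim c (-c))) b fun x hx => by
      refine hab x (fun i hi => hx (.inl i) (by simpa using hi)) fun j => le_antisymm
        (hx (.inr (.inl j)) (by simp)) ?_
      simpa using hx (.inr (.inr j)) (by simp)
  refine ⟨fun i => w (.inl i), fun j => w (.inr (.inl j)) - w (.inr (.inr j)),
    fun i hi => hw _ (by simpa using hi), ?_⟩
  rw [← hsum]
  ext x
  simp [Finset.sum_disjSum, LinearMap.sum_apply, sub_mul, ← sub_eq_add_neg]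

end Farkas

/-- A convex function lies above its tangent hyperplanes. -/
theorem ConvexOn.add_fderiv_sub_le {E : Type*} [NormedAddCommGroup E] [NormedSpace ℝ E]
    {f : E → ℝ} {x : E} (hf : ConvexOn ℝ Set.univ f) (hfx : DifferentiableAt ℝ f x) (y : E) :
    f x + fderiv ℝ f x (y - x) ≤ f y := by
  have hconv : ConvexOn ℝ Set.univ (f ∘ AffineMap.lineMap (k := ℝ) x y) :=
    hf.comp_affineMap (AffineMap.lineMap x y)
  have hderiv : HasDerivAt (f ∘ AffineMap.lineMap (k := ℝ) x y) (fderiv ℝ f x (y - x)) 0 :=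
    HasFDerivAt.comp_hasDerivAt (0 : ℝ) (by simpa using hfx.hasFDerivAt)
      AffineMap.hasDerivAt_lineMap
  have h := hconv.le_slope_of_hasDerivAt (Set.mem_univ _) (Set.mem_univ 1) one_pos hderiv
  simp only [slope_def_field, Function.comp_apply, AffineMap.lineMap_apply_one,
    AffineMap.lineMap_apply_zero, sub_zero, div_one] at h
  linarith

/-- Affine constraints that hold at `0`, with nonpositive slope where active, hold after a short step. -/
theorem exists_pos_forall_add_mul_nonpos {ι : Type*} [Finite ι] (α β : ι → ℝ)
    (hα : ∀ i, α i ≤ 0) (hβ : ∀ i, α i = 0 → β i ≤ 0) :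
    ∃ t : ℝ, 0 < t ∧ ∀ i, α i + t * β i ≤ 0 := by
  have hev : ∀ᶠ t in nhdsWithin (0 : ℝ) (Set.Ioi 0), ∀ i, α i + t * β i ≤ 0 := by
    refine Filter.eventually_all.2 fun i => ?_
    rcases (hα i).eq_or_lt with h0 | hneg
    · filter_upwards [self_mem_nhdsWithin] with t ht
      simpa [h0] using mul_nonpos_of_nonneg_of_nonpos (le_of_lt ht) (hβ i h0)
    · have hcont : Continuous fun t : ℝ => α i + t * β i := by fun_prop
      have : ∀ᶠ t in nhds (0 : ℝ), α i + t * β i < 0 :=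
        hcont.continuousAt.eventually_lt_const (by simpa using hneg)
      exact (this.filter_mono nhdsWithin_le_nhds).mono fun t ht => ht.le
  obtain ⟨t, ht, hpos⟩ := (hev.and self_mem_nhdsWithin).exists
  exact ⟨t, hpos, ht⟩

/-- Theorem 4: assume every feasible direction `z − zs` (for `z ∈ X`) lies in the
cone `T₀(zs)`. If `ds` minimizes `d ↦ ∇g(zs)·d` over `T₀(zs)` with nonnegative
optimal value, then `zs` is a global minimizer of `g` over `X` and KKT
multipliers `u ≥ 0`, `v ∈ ℝ^r` exist. -/
theorem stmt_6 {n s r : ℕ}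
    (g : EuclideanSpace ℝ (Fin n) → ℝ)
    (G : Fin s → EuclideanSpace ℝ (Fin n) → ℝ)
    (H : Fin r → EuclideanSpace ℝ (Fin n) → ℝ)
    (hg : ConvexOn ℝ Set.univ g) (hgd : Differentiable ℝ g)
    (hG : ∀ i, ConvexOn ℝ Set.univ (G i)) (hGd : ∀ i, Differentiable ℝ (G i))
    (hH : ∀ j, ConvexOn ℝ Set.univ (H j)) (hHd : ∀ j, Differentiable ℝ (H j))
    (X : Set (EuclideanSpace ℝ (Fin n)))
    (hX : X = {z | (∀ i, G i z ≤ 0) ∧ (∀ j, H j z = 0)})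
    (zs : EuclideanSpace ℝ (Fin n)) (hzs : zs ∈ X)
    (T₀ : Set (EuclideanSpace ℝ (Fin n)))
    (hT₀ : T₀ = {d | (∀ i, G i zs + fderiv ℝ (G i) zs d ≤ 0) ∧
                     (∀ j, fderiv ℝ (H j) zs d = 0)})
    (hdir : ∀ z ∈ X, (z - zs) ∈ T₀)
    (ds : EuclideanSpace ℝ (Fin n)) (hds : ds ∈ T₀)
    (hmin : ∀ d ∈ T₀, fderiv ℝ g zs ds ≤ fderiv ℝ g zs d)
    (hnonneg : 0 ≤ fderiv ℝ g zs ds) :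
    (∀ z ∈ X, g zs ≤ g z) ∧
    ∃ (u : Fin s → ℝ) (v : Fin r → ℝ), (∀ i, 0 ≤ u i) ∧
      (fderiv ℝ g zs + ∑ i, u i • fderiv ℝ (G i) zs
        + ∑ j, v j • fderiv ℝ (H j) zs = 0) ∧
      (∀ i, u i * G i zs = 0) := by
  classical
  have hfeas : ∀ i, G i zs ≤ 0 := by
    rw [hX] at hzs
    exact hzs.1
  have hT₀_nonneg : ∀ d ∈ T₀, 0 ≤ fderiv ℝ g zs d := fun d hd => hnonneg.trans (hmin d hd)
  refine ⟨fun z hz => ?_, ?_⟩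
  · have h1 := hg.add_fderiv_sub_le (hgd zs) z
    have h2 := hT₀_nonneg _ (hdir z hz)
    linarith
  let A : Finset (Fin s) := {i | G i zs = 0}
  obtain ⟨u, v, hu, hsum⟩ := exists_nonneg_sum_smul_add_sum_smul_eq A
      (fun i => (fderiv ℝ (G i) zs : Module.Dual ℝ (EuclideanSpace ℝ (Fin n))))
      (fun j => (fderiv ℝ (H j) zs : Module.Dual ℝ (EuclideanSpace ℝ (Fin n))))
      (-(fderiv ℝ g zs : Module.Dual ℝ (EuclideanSpace ℝ (Fin n)))) fun d hGd' hHd' => by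
    obtain ⟨t, ht, hstep⟩ := exists_pos_forall_add_mul_nonpos (fun i => G i zs)
      (fun i => fderiv ℝ (G i) zs d) hfeas fun i hi => hGd' i (by simpa [A] using hi)
    have hmem : t • d ∈ T₀ := by
      rw [hT₀]
      refine ⟨fun i => by simpa using hstep i, fun j => ?_⟩
      have := hHd' j
      simp_all
    have h := hT₀_nonneg _ hmem
    rw [map_smul, smul_eq_mul] at h
    simpa using nonneg_of_mul_nonneg_right h ht
  refine ⟨fun i => if i ∈ A then u i else 0, v, fun i => ?_, ?_, fun i => ?_⟩
  · dsimp only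
    split_ifs with hi
    exacts [hu i hi, le_rfl]
  · ext1 d
    have hd := LinearMap.congr_fun hsum d
    simp [ite_smul, Finset.sum_ite_mem] at hd ⊢
    linarith
  · by_cases hi : G i zs = 0 <;> simp [A, hi]
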